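/- For any ε, δ ∈ (0, 0.01) there exists n₀(ε, δ) such that the following holds for all n ≥ n₀(ε, δ): if G is a graph on n vertices with least adjacency eigenvalue λ_n ≥ −n^(1/4 − ε), then ∑_{i : λ_i ≤ (εδ)^(1/ε) n} λ_i² ≤ δn². -/

import Mathlib

-- The adjacency matrix of a simple graph, over `ℝ`.
open scoped Classical in
noncomputable def adjMat {V : Type*} (G : SimpleGraph V) : Matrix V V ℝ :=
  Matrix.of fun i j => if G.Adj i j then (1 : ℝ) else 0

/-!
Write `A` for the adjacency matrix, `t = n ^ (1/4 - ε)`, and let `S r` be the sum of the positive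
parts of the `r` largest eigenvalues. Truncating the spectral decomposition of `A` gives a matrix
`P` of rank at most `r` and trace `S r` with `0 ≤ P ≤ A + t • 1`. By the Schur product theorem
`P ⊙ P ≤ (A + t • 1) ⊙ (A + t • 1)`, and the right side is `A + t ^ 2 • 1` because `A` has zero
diagonal and entries in `{0, 1}`. As `P ⊙ P` has rank at most `r ^ 2`, Ky Fan's inequality and
Cauchy-Schwarz on the diagonal of `P` yield `S r ^ 2 ≤ n * (S (r ^ 2) + t ^ 2 * r ^ 2)`.

Replacing `r` by `r ^ 2` until it exceeds `√n`, where `S r ≤ n * t` (the eigenvalues sum to `0`)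
is good enough, gives `S r ≤ 2 * n * r ^ (1/2 - 2ε)`. So the `r`-th largest eigenvalue is at most
`2 * n * r ^ (-(1/2 + 2ε))`, which is square-summable in `r`; the cutoff `(εδ) ^ (1/ε) * n` turns
part of this decay into the factor `δ`.
-/

section MatrixLemmas

open Matrix
open scoped MatrixOrder

variable {m n : Type*} [Fintype n] {K : Type*} [Field K]

lemma exists_eq_mul_of_rank (A : Matrix m n K) :
    ∃ (C : Matrix m (Fin A.rank) K) (D : Matrix (Fin A.rank) n K), A = C * D := by
  classical
  let b := Module.finBasis K (LinearMap.range A.mulVecLin)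
  let col (j : n) : LinearMap.range A.mulVecLin :=
    ⟨A.col j, Pi.single j 1, mulVec_single_one A j⟩
  refine ⟨of fun i k => (b k : m → K) i, of fun k j => b.repr (col j) k, ?_⟩
  ext i j
  have hcol := congrFun (congrArg Subtype.val (b.sum_repr (col j))) i
  simp only [Submodule.coe_sum, Submodule.coe_smul, Finset.sum_apply, Pi.smul_apply, smul_eq_mul,
    mul_comm (b.repr _ _)] at hcol
  exact hcol.symm

lemma rank_hadamard_le (A B : Matrix m n K) : (A ⊙ B).rank ≤ A.rank * B.rank := by
  obtain ⟨C, D, hA⟩ := exists_eq_mul_of_rank A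
  obtain ⟨C', D', hB⟩ := exists_eq_mul_of_rank B
  have hAB : A ⊙ B = of (fun i (k : Fin A.rank × Fin B.rank) => C i k.1 * C' i k.2) *
      of (fun (k : Fin A.rank × Fin B.rank) j => D k.1 j * D' k.2 j) := by
    ext i j
    conv_lhs => rw [hadamard_apply, hA, hB]
    simp only [mul_apply, of_apply, Fintype.sum_mul_sum, Fintype.sum_prod_type,
      mul_mul_mul_comm]
  rw [hAB]
  refine (rank_mul_le_left _ _).trans ((rank_le_card_width _).trans_eq ?_)
  simp only [Fintype.card_prod, Fintype.card_fin]

lemma hadamard_self_le_hadamard_self {m : Type*} {P B : Matrix m m ℝ} (hP : 0 ≤ P) (hPB : P ≤ B) :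
    P ⊙ P ≤ B ⊙ B := by
  have hB : B.PosSemidef := (hP.trans hPB).posSemidef
  have hdiff : B ⊙ B - P ⊙ P = (B - P) ⊙ B + P ⊙ (B - P) := by
    ext i j
    simp only [Matrix.sub_apply, Matrix.add_apply, hadamard_apply]
    ring
  rw [le_iff, hdiff]
  exact (hPB.hadamard hB).add (hP.posSemidef.hadamard hPB)

lemma sq_trace_le_card_mul_trace_hadamard_self (P : Matrix n n ℝ) :
    P.trace ^ 2 ≤ Fintype.card n * (P ⊙ P).trace := by
  simpa [trace, sq] using sq_sum_le_card_mul_sum_sq (s := Finset.univ) (f := P.diag)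

lemma diag_transpose_mul_self_le_one [Fintype m] [DecidableEq m] {W : Matrix m n ℝ}
    (hW : W * Wᵀ = 1) (i : n) : (Wᵀ * W) i i ≤ 1 := by
  classical
  -- `Wᵀ * W` is a symmetric idempotent, so `1 - Wᵀ * W` is the square of itself.
  have hidem : 1 - Wᵀ * W = (1 - Wᵀ * W)ᴴ * (1 - Wᵀ * W) := by
    have h : Wᵀ * W * (Wᵀ * W) = Wᵀ * W := by
      rw [Matrix.mul_assoc, ← Matrix.mul_assoc W, hW, Matrix.one_mul]
    simp [conjTranspose_eq_transpose_of_trivial, Matrix.mul_sub, Matrix.sub_mul, h]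
  have hpos := posSemidef_conjTranspose_mul_self (1 - Wᵀ * W)
  rw [← hidem] at hpos
  simpa using hpos.diag_nonneg (i := i)

lemma exists_mul_transpose_eq_one_trace_eq [DecidableEq n] {X : Matrix n n ℝ} (hX : X.IsHermitian) :
    ∃ W : Matrix {i // hX.eigenvalues i ≠ 0} n ℝ, W * Wᵀ = 1 ∧ (W * X * Wᵀ).trace = X.trace := by
  let E : Matrix n n ℝ := (hX.eigenvectorUnitary : Matrix n n ℝ)
  have hE : Eᵀ * E = 1 := Unitary.coe_star_mul_self hX.eigenvectorUnitary
  have hdiag : Eᵀ * X * E = diagonal hX.eigenvalues := by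
    have h := hX.conjStarAlgAut_star_eigenvectorUnitary
    rw [Unitary.conjStarAlgAut_star_apply] at h
    exact h
  let W : Matrix {i // hX.eigenvalues i ≠ 0} n ℝ := Eᵀ.submatrix Subtype.val id
  have hW (Y : Matrix n n ℝ) : W * Y * Wᵀ = (Eᵀ * Y * E).submatrix Subtype.val Subtype.val := rfl
  refine ⟨W, ?_, ?_⟩
  · have h := hW 1
    rwa [Matrix.mul_one, Matrix.mul_one, hE, submatrix_one _ Subtype.val_injective] at h
  · rw [hW, hdiag, hX.trace_eq_sum_eigenvalues, submatrix_diagonal _ _ Subtype.val_injective,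
      trace_diagonal]
    exact (Finset.sum_subtype _ (fun i => Finset.mem_filter_univ i) hX.eigenvalues).symm.trans
      (Finset.sum_filter_ne_zero _)

lemma trace_mul_diagonal_mul_transpose [Fintype m] [DecidableEq n] (W : Matrix m n K) (d : n → K) :
    (W * diagonal d * Wᵀ).trace = ∑ i, d i * (Wᵀ * W) i i := by
  rw [trace_mul_comm, ← Matrix.mul_assoc, trace_mul_comm]
  simp only [trace, diag_apply, diagonal_mul]

lemma rank_mul_diagonal_mul_le {l : Type*} [Fintype l] {k r : ℕ} (C : Matrix m (Fin k) K)
    (D : Matrix (Fin k) l K) {d : Fin k → K} (hd : ∀ i, r ≤ i.val → d i = 0) :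
    (C * diagonal d * D).rank ≤ r := by
  classical
  calc (C * diagonal d * D).rank
      ≤ (diagonal d).rank := (rank_mul_le_left _ _).trans (rank_mul_le_right _ _)
    _ = Finset.card {i | d i ≠ 0} := by rw [rank_diagonal, Fintype.card_subtype]
    _ ≤ Finset.card {i : Fin k | i.val < r} :=
        Finset.card_le_card (Finset.monotone_filter_right _ fun i _ =>
          not_imp_comm.mp fun hi => hd i (not_lt.mp hi))
    _ ≤ r := Fin.card_filter_val_lt.trans_le (min_le_right k r)

end MatrixLemmas

section TopSum

/-- The sum of the positive parts of the first `r` entries of `μ`; the sequences of interest are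
antitone, so these are the `r` largest entries. -/
noncomputable def topSum {n : ℕ} (μ : Fin n → ℝ) (r : ℕ) : ℝ :=
  ∑ i : Fin n with i.val < r, (μ i)⁺

variable {n : ℕ}

lemma topSum_mono (μ : Fin n → ℝ) : Monotone (topSum μ) := fun _ _ hrs =>
  Finset.sum_le_sum_of_subset_of_nonneg
    (Finset.monotone_filter_right _ fun _ _ hi => lt_of_lt_of_le hi hrs)
    fun _ _ _ => posPart_nonneg _

lemma topSum_le_sum_posPart (μ : Fin n → ℝ) (r : ℕ) : topSum μ r ≤ ∑ i, (μ i)⁺ :=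
  Finset.sum_le_sum_of_subset_of_nonneg (Finset.filter_subset _ _) fun _ _ _ => posPart_nonneg _

lemma topSum_add_const_le (μ : Fin n → ℝ) {s : ℝ} (hs : 0 ≤ s) (r : ℕ) :
    topSum (fun i => μ i + s) r ≤ topSum μ r + r * s := by
  have hterm (i : Fin n) : (μ i + s)⁺ ≤ (μ i)⁺ + s :=
    sup_le (add_le_add_left (le_posPart _) s) (add_nonneg (posPart_nonneg _) hs)
  refine (Finset.sum_le_sum fun i _ => hterm i).trans ?_
  rw [Finset.sum_add_distrib, Finset.sum_const, nsmul_eq_mul]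
  gcongr
  · rfl
  · exact Fin.card_filter_val_lt.trans_le (min_le_right n r)

lemma sq_topSum_le_mul_sum_sq (μ : Fin n → ℝ) (r : ℕ) : topSum μ r ^ 2 ≤ r * ∑ i, μ i ^ 2 := by
  have hterm (i : Fin n) : (μ i)⁺ ^ 2 ≤ μ i ^ 2 := by
    rw [sq_le_sq, abs_of_nonneg (posPart_nonneg _)]
    exact sup_le (le_abs_self _) (abs_nonneg _)
  refine sq_sum_le_card_mul_sum_sq.trans ?_
  gcongr
  · exact Fin.card_filter_val_lt.trans_le (min_le_right n r)
  · refine (Finset.sum_le_sum_of_subset_of_nonneg (Finset.filter_subset _ _)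
      fun _ _ _ => sq_nonneg _).trans (Finset.sum_le_sum fun i _ => hterm i)

lemma succ_mul_posPart_le_topSum {μ : Fin n → ℝ} (hμ : Antitone μ) (i : Fin n) :
    (i.val + 1) * (μ i)⁺ ≤ topSum μ (i.val + 1) := by
  have hcard : Finset.card {j : Fin n | j.val < i.val + 1} = i.val + 1 := by
    rw [Fin.card_filter_val_lt, min_eq_right i.isLt]
  have h := Finset.card_nsmul_le_sum {j : Fin n | j.val < i.val + 1} (fun j => (μ j)⁺) (μ i)⁺
    fun j hj => posPart_mono (hμ (Nat.lt_succ_iff.mp (Finset.mem_filter.mp hj).2))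
  rw [hcard, nsmul_eq_mul] at h
  exact_mod_cast h

lemma exists_posPart_threshold {μ : Fin n → ℝ} (hμ : Antitone μ) (m : ℕ) :
    ∃ c : ℝ, 0 ≤ c ∧ (∀ i : Fin n, i.val < m → c ≤ (μ i)⁺) ∧
      ∀ i : Fin n, m ≤ i.val → (μ i)⁺ ≤ c := by
  by_cases hm : m < n
  · exact ⟨(μ ⟨m, hm⟩)⁺, posPart_nonneg _, fun i hi => posPart_mono (hμ hi.le),
      fun i hi => posPart_mono (hμ hi)⟩
  · exact ⟨0, le_rfl, fun i _ => posPart_nonneg _, fun i hi => by omega⟩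

lemma sum_mul_le_topSum {μ p : Fin n → ℝ} (hμ : Antitone μ) (hp₀ : ∀ i, 0 ≤ p i)
    (hp₁ : ∀ i, p i ≤ 1) {m : ℕ} (hpm : ∑ i, p i ≤ m) : ∑ i, μ i * p i ≤ topSum μ m := by
  obtain ⟨c, hc, hc_le, hle_c⟩ := exists_posPart_threshold hμ m
  have hterm (i : Fin n) : μ i * p i ≤ (if i.val < m then (μ i)⁺ - c else 0) + c * p i := by
    have hpos : μ i * p i ≤ (μ i)⁺ * p i := mul_le_mul_of_nonneg_right (le_posPart _) (hp₀ i)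
    split_ifs with hi
    · nlinarith [hc_le i hi, hp₁ i]
    · nlinarith [hle_c i (not_lt.mp hi), hp₀ i]
  have hp_card : ∑ i, p i ≤ Finset.card {i : Fin n | i.val < m} := by
    rw [Fin.card_filter_val_lt, Nat.cast_min]
    refine le_min ?_ hpm
    simpa using Finset.sum_le_sum fun i (_ : i ∈ Finset.univ) => hp₁ i
  calc ∑ i, μ i * p i
      ≤ ∑ i, ((if i.val < m then (μ i)⁺ - c else 0) + c * p i) :=
        Finset.sum_le_sum fun i _ => hterm i
    _ = topSum μ m - Finset.card {i : Fin n | i.val < m} * c + c * ∑ i, p i := by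
        rw [Finset.sum_add_distrib, ← Finset.sum_filter, Finset.sum_sub_distrib,
          Finset.sum_const, nsmul_eq_mul, Finset.mul_sum, topSum]
    _ ≤ topSum μ m := by nlinarith

lemma exists_equiv_antitone {ι : Type*} [Fintype ι] (μ : ι → ℝ) :
    ∃ e : Fin (Fintype.card ι) ≃ ι, Antitone (μ ∘ e) := by
  let e₀ := (Fintype.equivFin ι).symm
  exact ⟨(Tuple.sort (OrderDual.toDual ∘ μ ∘ e₀)).trans e₀,
    fun _ _ hij => Tuple.monotone_sort (OrderDual.toDual ∘ μ ∘ e₀) hij⟩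

end TopSum

section EigenDecomposition

open Matrix
open scoped MatrixOrder

/-- `A = Uᵀ diag(μ) U` with `U` orthogonal: the rows of `U` are an orthonormal basis of
eigenvectors of `A`, with eigenvalues `μ`. The index type `κ` of the eigenvalues may differ from
that of the matrix, so that the eigenvalues can be listed in decreasing order along `Fin n`. -/
structure IsEigenDecomposition {ι κ : Type*} [Fintype ι] [DecidableEq ι] [Fintype κ]
    [DecidableEq κ] (A : Matrix ι ι ℝ) (μ : κ → ℝ) (U : Matrix κ ι ℝ) : Prop where
  mul_transpose_eq_one : U * Uᵀ = 1
  transpose_mul_eq_one : Uᵀ * U = 1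
  eq_conj_diagonal : A = Uᵀ * diagonal μ * U

lemma conj_diagonal_le {ι κ : Type*} [Finite ι] [Fintype κ] [DecidableEq κ]
    (U : Matrix κ ι ℝ) {α β : κ → ℝ} (h : α ≤ β) : Uᵀ * diagonal α * U ≤ Uᵀ * diagonal β * U := by
  rw [le_iff, ← Matrix.sub_mul, ← Matrix.mul_sub, diagonal_sub]
  exact (PosSemidef.diagonal fun i => sub_nonneg.mpr (h i)).conjTranspose_mul_mul_same U

namespace IsEigenDecomposition

variable {ι κ : Type*} [Fintype ι] [DecidableEq ι] [Fintype κ] [DecidableEq κ]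
  {A : Matrix ι ι ℝ} {μ : κ → ℝ} {U : Matrix κ ι ℝ}

lemma of_orthonormal {μ : ι → ℝ} {v : ι → ι → ℝ} (hv : ∀ i, A *ᵥ v i = μ i • v i)
    (hon : ∀ i j, ∑ k, v i k * v j k = if i = j then (1 : ℝ) else 0) :
    IsEigenDecomposition A μ (of v) := by
  have hUUt : of v * (of v)ᵀ = 1 := by
    ext i j
    simpa only [mul_apply, of_apply, transpose_apply, one_apply] using hon i j
  have hUtU : (of v)ᵀ * of v = 1 := mul_eq_one_comm.mp hUUt
  have hAUt : A * (of v)ᵀ = (of v)ᵀ * diagonal μ := by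
    ext i j
    rw [mul_diagonal, mul_comm]
    exact congrFun (hv j) i
  exact ⟨hUUt, hUtU, by rw [← hAUt, Matrix.mul_assoc, hUtU, Matrix.mul_one]⟩

lemma submatrix {κ' : Type*} [Fintype κ'] [DecidableEq κ'] (h : IsEigenDecomposition A μ U)
    (e : κ' ≃ κ) : IsEigenDecomposition A (μ ∘ e) (U.submatrix e id) where
  mul_transpose_eq_one := by
    rw [transpose_submatrix, ← submatrix_mul U Uᵀ e id e Function.bijective_id,
      h.mul_transpose_eq_one, submatrix_one_equiv]
  transpose_mul_eq_one := by
    rw [transpose_submatrix, submatrix_mul_equiv, h.transpose_mul_eq_one, submatrix_id_id]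
  eq_conj_diagonal := by
    rw [transpose_submatrix, ← submatrix_diagonal_equiv, submatrix_mul_equiv, submatrix_mul_equiv,
      ← h.eq_conj_diagonal, submatrix_id_id]

lemma trace_conj_diagonal (h : IsEigenDecomposition A μ U) (α : κ → ℝ) :
    (Uᵀ * diagonal α * U).trace = ∑ i, α i := by
  rw [trace_mul_comm, ← Matrix.mul_assoc, h.mul_transpose_eq_one, Matrix.one_mul, trace_diagonal]

lemma trace_eq (h : IsEigenDecomposition A μ U) : A.trace = ∑ i, μ i := by
  conv_lhs => rw [h.eq_conj_diagonal]
  exact h.trace_conj_diagonal μ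

lemma mul_self (h : IsEigenDecomposition A μ U) : IsEigenDecomposition (A * A) (μ ^ 2) U where
  mul_transpose_eq_one := h.mul_transpose_eq_one
  transpose_mul_eq_one := h.transpose_mul_eq_one
  eq_conj_diagonal := by
    conv_lhs => rw [h.eq_conj_diagonal]
    calc Uᵀ * diagonal μ * U * (Uᵀ * diagonal μ * U)
        = Uᵀ * diagonal μ * (U * Uᵀ) * diagonal μ * U := by simp only [Matrix.mul_assoc]
      _ = Uᵀ * diagonal (μ ^ 2) * U := by
        rw [h.mul_transpose_eq_one, Matrix.mul_one, Matrix.mul_assoc Uᵀ, diagonal_mul_diagonal, sq]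
        rfl

lemma add_smul_one (h : IsEigenDecomposition A μ U) (t : ℝ) :
    IsEigenDecomposition (A + t • 1) (fun i => μ i + t) U where
  mul_transpose_eq_one := h.mul_transpose_eq_one
  transpose_mul_eq_one := h.transpose_mul_eq_one
  eq_conj_diagonal := by
    rw [← diagonal_add, Matrix.mul_add, Matrix.add_mul, ← h.eq_conj_diagonal,
      ← smul_one_eq_diagonal, Matrix.mul_smul, Matrix.mul_one, Matrix.smul_mul,
      h.transpose_mul_eq_one]

section Fin

variable {n : ℕ} {μ : Fin n → ℝ} {U : Matrix (Fin n) ι ℝ}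

lemma trace_mul_mul_transpose_le {m : Type*} [Fintype m] [DecidableEq m]
    (h : IsEigenDecomposition A μ U) (hμ : Antitone μ) {W : Matrix m ι ℝ} (hW : W * Wᵀ = 1) :
    (W * A * Wᵀ).trace ≤ topSum μ (Fintype.card m) := by
  let R := W * Uᵀ
  have hR : R * Rᵀ = 1 := by
    rw [transpose_mul, transpose_transpose, Matrix.mul_assoc, ← Matrix.mul_assoc Uᵀ,
      h.transpose_mul_eq_one, Matrix.one_mul, hW]
  have htrace : (W * A * Wᵀ).trace = ∑ i, μ i * (Rᵀ * R) i i := by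
    rw [← trace_mul_diagonal_mul_transpose, h.eq_conj_diagonal, transpose_mul, transpose_transpose]
    simp only [R, Matrix.mul_assoc]
  rw [htrace]
  refine sum_mul_le_topSum hμ (fun i => ?_) (diag_transpose_mul_self_le_one hR) ?_
  · exact (posSemidef_conjTranspose_mul_self R).diag_nonneg
  · change (Rᵀ * R).trace ≤ _
    rw [trace_mul_comm, hR, trace_one]

lemma trace_le_topSum_rank (h : IsEigenDecomposition A μ U) (hμ : Antitone μ) {X : Matrix ι ι ℝ}
    (hX : X.IsHermitian) (hXA : X ≤ A) : X.trace ≤ topSum μ X.rank := by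
  obtain ⟨W, hW, htrace⟩ := exists_mul_transpose_eq_one_trace_eq hX
  have hmono : (W * X * Wᵀ).trace ≤ (W * A * Wᵀ).trace := by
    rw [← sub_nonneg, ← trace_sub, ← Matrix.sub_mul, ← Matrix.mul_sub]
    exact (PosSemidef.mul_mul_conjTranspose_same hXA W).trace_nonneg
  rw [← htrace, hX.rank_eq_card_non_zero_eigs]
  exact hmono.trans (h.trace_mul_mul_transpose_le hμ hW)

lemma exists_rank_le_trace_eq_topSum (h : IsEigenDecomposition A μ U) {t : ℝ} (ht : 0 ≤ t)
    (hμt : ∀ i, -t ≤ μ i) (r : ℕ) :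
    ∃ P : Matrix ι ι ℝ, 0 ≤ P ∧ P ≤ A + t • 1 ∧ P.rank ≤ r ∧ P.trace = topSum μ r := by
  let α : Fin n → ℝ := fun i => if i.val < r then (μ i)⁺ else 0
  have hα_nonneg : 0 ≤ α := fun i => by
    dsimp only [α]
    split_ifs
    exacts [posPart_nonneg _, le_rfl]
  have hα_le : α ≤ fun i => μ i + t := fun i => by
    have hi := neg_le_iff_add_nonneg.mp (hμt i)
    dsimp only [α]
    split_ifs
    exacts [sup_le (le_add_of_nonneg_right ht) hi, hi]
  refine ⟨Uᵀ * diagonal α * U, ?_, ?_, ?_, ?_⟩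
  · simpa using conj_diagonal_le U hα_nonneg
  · rw [(h.add_smul_one t).eq_conj_diagonal]
    exact conj_diagonal_le U hα_le
  · exact rank_mul_diagonal_mul_le _ _ fun i hi => if_neg hi.not_gt
  · rw [h.trace_conj_diagonal, topSum, Finset.sum_filter]

end Fin

end IsEigenDecomposition

end EigenDecomposition

section Real

lemma rpow_mul_le_mul_rpow {x y c : ℝ} (hx : 0 < x) (hxy : x ≤ y) (hc : c ≤ 1) :
    y ^ c * x ≤ y * x ^ c := by
  have hy := hx.trans_le hxy
  have h : x ^ (1 - c) ≤ y ^ (1 - c) := Real.rpow_le_rpow hx.le hxy (sub_nonneg.mpr hc)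
  rw [Real.rpow_sub hx, Real.rpow_sub hy, Real.rpow_one, Real.rpow_one,
    div_le_div_iff₀ (by positivity) (by positivity)] at h
  linarith

lemma le_two_mul_rpow_of_sq_le {S : ℕ → ℝ} {n : ℕ} {c : ℝ} (hc₀ : 0 ≤ c) (hc₁ : c ≤ 1)
    (hone : S 1 ≤ n) (hS : ∀ r, S r ≤ n * (n : ℝ) ^ (c / 2))
    (hsq : ∀ r, S r ^ 2 ≤ n * (S (r ^ 2) + (n : ℝ) ^ c * (r ^ 2 : ℕ))) {r : ℕ} (hr : 1 ≤ r) :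
    S r ≤ 2 * n * (r : ℝ) ^ c := by
  have hrc : ((r ^ 2 : ℕ) : ℝ) ^ c = ((r : ℝ) ^ c) ^ 2 := by
    rw [Nat.cast_pow, Real.rpow_pow_comm r.cast_nonneg]
  rcases lt_or_ge n (r ^ 2) with hlarge | hsmall
  · have hhalf : (n : ℝ) ^ (c / 2) ≤ (r : ℝ) ^ c := by
      calc (n : ℝ) ^ (c / 2) ≤ ((r : ℝ) ^ (2 : ℕ)) ^ (c / 2) := by
            gcongr
            exact_mod_cast hlarge.le
        _ = (r : ℝ) ^ c := by
            rw [← Real.rpow_natCast_mul r.cast_nonneg, Nat.cast_ofNat,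
              mul_div_cancel₀ c two_ne_zero]
    calc S r ≤ n * (n : ℝ) ^ (c / 2) := hS r
      _ ≤ n * (r : ℝ) ^ c := by gcongr
      _ ≤ 2 * n * (r : ℝ) ^ c := by gcongr; linarith
  rcases hr.eq_or_lt with rfl | _
  · rw [Nat.cast_one, Real.one_rpow]
    linarith
  · have ih : S (r ^ 2) ≤ 2 * n * ((r : ℝ) ^ c) ^ 2 :=
      hrc ▸ le_two_mul_rpow_of_sq_le hc₀ hc₁ hone hS hsq (Nat.one_le_pow 2 r hr)
    have herr : (n : ℝ) ^ c * (r ^ 2 : ℕ) ≤ n * ((r : ℝ) ^ c) ^ 2 :=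
      hrc ▸ rpow_mul_le_mul_rpow (by positivity) (by exact_mod_cast hsmall) hc₁
    refine le_of_sq_le_sq ((hsq r).trans ?_) (by positivity)
    calc (n : ℝ) * (S (r ^ 2) + (n : ℝ) ^ c * (r ^ 2 : ℕ))
        ≤ n * (2 * n * ((r : ℝ) ^ c) ^ 2 + n * ((r : ℝ) ^ c) ^ 2) := by gcongr
      _ = 3 * (n * (r : ℝ) ^ c) ^ 2 := by ring
      _ ≤ (2 * n * (r : ℝ) ^ c) ^ 2 := by nlinarith [sq_nonneg ((n : ℝ) * (r : ℝ) ^ c)]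
termination_by n - r
decreasing_by
  have : r < r ^ 2 := by nlinarith
  omega

lemma sum_range_succ_rpow_le {s : ℝ} (hs : 0 < s) (n : ℕ) :
    ∑ i ∈ Finset.range n, ((i : ℝ) + 1) ^ (-(1 + s)) ≤ 1 + 1 / s := by
  cases n with
  | zero => simp only [Finset.range_zero, Finset.sum_empty]; positivity
  | succ m =>
    have hanti : AntitoneOn (fun x : ℝ => x ^ (-(1 + s))) (Set.Icc 1 (1 + m)) :=
      fun x hx y _ hxy => Real.rpow_le_rpow_of_nonpos (by linarith [hx.1]) hxy (by linarith)
    have hint : ∫ x in (1 : ℝ)..1 + m, x ^ (-(1 + s)) = (1 - (1 + (m : ℝ)) ^ (-s)) / s := by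
      have h0 : (0 : ℝ) ∉ Set.uIcc 1 (1 + (m : ℝ)) := by
        rw [Set.uIcc_of_le (by simp)]
        exact fun h => absurd h.1 (by norm_num)
      rw [integral_rpow (Or.inr ⟨by linarith, h0⟩), Real.one_rpow, show -(1 + s) + 1 = -s by ring,
        div_neg, ← neg_div, neg_sub]
    have htail : ∑ i ∈ Finset.range m, (((i + 1 : ℕ) : ℝ) + 1) ^ (-(1 + s)) ≤ 1 / s := by
      calc _ = ∑ i ∈ Finset.range m, (1 + ((i + 1 : ℕ) : ℝ)) ^ (-(1 + s)) := by
            simp only [add_comm]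
        _ ≤ (1 - (1 + (m : ℝ)) ^ (-s)) / s := hint ▸ hanti.sum_le_integral
        _ ≤ 1 / s := by
            gcongr
            exact sub_le_self _ (by positivity)
    rw [Finset.sum_range_succ', add_comm, Nat.cast_zero, zero_add, Real.one_rpow]
    gcongr

lemma sq_le_mul_rpow_of_le_rpow {a y q ε : ℝ} (ha : 0 ≤ a) (hy : 0 ≤ y) (hq : 1 ≤ q) (hε : 0 < ε)
    (hε' : ε ≤ 1 / 4) (hya : y ≤ a ^ (1 / ε)) (hyq : y ≤ 2 * q ^ (-(1 / 2 + 2 * ε))) :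
    y ^ 2 ≤ 4 * a ^ 2 * q ^ (-(1 + 2 * ε)) := by
  have hq_pos : 0 < q := one_pos.trans_le hq
  have hsplit : y ^ 2 = y ^ (2 * ε) * y ^ (2 - 2 * ε) := by
    rw [← Real.rpow_add_of_nonneg hy (by linarith) (by linarith), add_sub_cancel, Real.rpow_two]
  have hfirst : y ^ (2 * ε) ≤ a ^ 2 := by
    calc y ^ (2 * ε) ≤ (a ^ (1 / ε)) ^ (2 * ε) := by gcongr
      _ = a ^ 2 := by
        rw [← Real.rpow_mul ha, show 1 / ε * (2 * ε) = 2 by field_simp, Real.rpow_two]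
  have hsecond : y ^ (2 - 2 * ε) ≤ 4 * q ^ (-(1 + 2 * ε)) := by
    calc y ^ (2 - 2 * ε) ≤ (2 * q ^ (-(1 / 2 + 2 * ε))) ^ (2 - 2 * ε) :=
          Real.rpow_le_rpow hy hyq (by linarith)
      _ = 2 ^ (2 - 2 * ε) * q ^ (-(1 / 2 + 2 * ε) * (2 - 2 * ε)) := by
        rw [Real.mul_rpow (by norm_num) (by positivity), ← Real.rpow_mul hq_pos.le]
      _ ≤ 2 ^ (2 : ℝ) * q ^ (-(1 + 2 * ε)) := by
        gcongr
        · norm_num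
        · linarith
        · nlinarith
      _ = 4 * q ^ (-(1 + 2 * ε)) := by norm_num
  calc y ^ 2 ≤ a ^ 2 * (4 * q ^ (-(1 + 2 * ε))) := by rw [hsplit]; gcongr
    _ = 4 * a ^ 2 * q ^ (-(1 + 2 * ε)) := by ring

lemma sum_posPart_sq_le {n : ℕ} {μ : Fin n → ℝ} {a ε : ℝ} (ha : 0 ≤ a) (hε : 0 < ε)
    (hε' : ε ≤ 1 / 4) (hμ : ∀ i, (μ i)⁺ ≤ 2 * n * ((i.val : ℝ) + 1) ^ (-(1 / 2 + 2 * ε))) :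
    ∑ i with μ i ≤ a ^ (1 / ε) * n, (μ i)⁺ ^ 2 ≤ 4 * a ^ 2 * (1 + 1 / (2 * ε)) * n ^ 2 := by
  have hterm (i : Fin n) (hi : μ i ≤ a ^ (1 / ε) * n) :
      (μ i)⁺ ^ 2 ≤ 4 * a ^ 2 * n ^ 2 * ((i.val : ℝ) + 1) ^ (-(1 + 2 * ε)) := by
    have hn : (0 : ℝ) < n := by exact_mod_cast i.pos
    have hdecay : (μ i)⁺ / n ≤ 2 * ((i.val : ℝ) + 1) ^ (-(1 / 2 + 2 * ε)) := by
      rw [div_le_iff₀ hn]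
      linarith [hμ i]
    have hcut : (μ i)⁺ / n ≤ a ^ (1 / ε) := (div_le_iff₀ hn).mpr (sup_le hi (by positivity))
    have h := sq_le_mul_rpow_of_le_rpow ha (by positivity) (by simp) hε hε' hcut hdecay
    rw [div_pow, div_le_iff₀ (by positivity)] at h
    linarith
  calc ∑ i with μ i ≤ a ^ (1 / ε) * n, (μ i)⁺ ^ 2
      ≤ ∑ i : Fin n with μ i ≤ a ^ (1 / ε) * n,
          4 * a ^ 2 * n ^ 2 * ((i.val : ℝ) + 1) ^ (-(1 + 2 * ε)) :=
        Finset.sum_le_sum fun i hi => hterm i (Finset.mem_filter.mp hi).2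
    _ ≤ ∑ i : Fin n, 4 * a ^ 2 * n ^ 2 * ((i.val : ℝ) + 1) ^ (-(1 + 2 * ε)) :=
        Finset.sum_le_sum_of_subset_of_nonneg (Finset.filter_subset _ _) fun _ _ _ => by positivity
    _ = 4 * a ^ 2 * n ^ 2 * ∑ i ∈ Finset.range n, ((i : ℝ) + 1) ^ (-(1 + 2 * ε)) := by
        rw [← Finset.mul_sum, Fin.sum_univ_eq_sum_range fun i => ((i : ℝ) + 1) ^ (-(1 + 2 * ε))]
    _ ≤ 4 * a ^ 2 * n ^ 2 * (1 + 1 / (2 * ε)) := by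
        gcongr
        exact sum_range_succ_rpow_le (by positivity) n
    _ = 4 * a ^ 2 * (1 + 1 / (2 * ε)) * n ^ 2 := by ring

lemma sq_le_posPart_sq_add_sq {x t : ℝ} (hx : -t ≤ x) : x ^ 2 ≤ x⁺ ^ 2 + t ^ 2 := by
  rcases le_total 0 x with h | h
  · rw [posPart_of_nonneg h]
    linarith [sq_nonneg t]
  · rw [posPart_of_nonpos h]
    nlinarith

lemma mul_rpow_sq_le {x δ ε : ℝ} (hδ : 0 < δ) (hδ' : δ ≤ 1) (hε : 0 ≤ ε)
    (hxδ : (4 / δ) ^ 2 ≤ x) :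
    x * (x ^ (1 / 4 - ε)) ^ 2 ≤ δ / 4 * x ^ 2 := by
  have hx : 1 ≤ x := (one_le_pow₀ ((one_le_div₀ hδ).mpr (by linarith))).trans hxδ
  have hx_nonneg : 0 ≤ x := zero_le_one.trans hx
  have hpow : (x ^ (1 / 4 - ε)) ^ 2 ≤ √x := by
    rw [← Real.rpow_mul_natCast hx_nonneg, Real.sqrt_eq_rpow]
    gcongr
    · push_cast
      linarith
  have hsqrt : 4 ≤ δ * √x := (div_le_iff₀' hδ).mp (Real.le_sqrt_of_sq_le hxδ)
  calc x * (x ^ (1 / 4 - ε)) ^ 2 ≤ x * √x := by gcongr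
    _ ≤ x * √x * (δ * √x / 4) := le_mul_of_one_le_right (by positivity) (by linarith)
    _ = δ / 4 * x * √x ^ 2 := by ring
    _ = δ / 4 * x ^ 2 := by rw [Real.sq_sqrt hx_nonneg]; ring

lemma four_mul_sq_mul_le {δ ε : ℝ} (hε : 0 < ε) (hε' : ε ≤ 1 / 4) (hδ : 0 ≤ δ) (hδ' : δ ≤ 1) :
    4 * (ε * δ) ^ 2 * (1 + 1 / (2 * ε)) ≤ 3 / 4 * δ := by
  calc 4 * (ε * δ) ^ 2 * (1 + 1 / (2 * ε)) = (4 * ε ^ 2 + 2 * ε) * δ ^ 2 := by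
        field_simp
        ring
    _ ≤ 3 / 4 * δ := by
        gcongr
        · nlinarith
        · nlinarith

end Real

section Graph

open Matrix
open scoped MatrixOrder

variable {V : Type*} {G : SimpleGraph V} [DecidableRel G.Adj]

lemma adjMat_eq_adjMatrix : adjMat G = G.adjMatrix ℝ := by
  ext i j
  rw [adjMat, of_apply, SimpleGraph.adjMatrix_apply]
  congr

lemma trace_adjMatrix_mul_self_le [Fintype V] :
    (G.adjMatrix ℝ * G.adjMatrix ℝ).trace ≤ Fintype.card V ^ 2 := by
  have hentry (i j : V) : G.adjMatrix ℝ i j * G.adjMatrix ℝ j i ≤ 1 := by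
    rw [SimpleGraph.adjMatrix_apply, SimpleGraph.adjMatrix_apply]
    split_ifs <;> norm_num
  simpa [trace, mul_apply, sq] using
    Finset.sum_le_sum fun i (_ : i ∈ Finset.univ) =>
      Finset.sum_le_sum fun j (_ : j ∈ Finset.univ) => hentry i j

lemma hadamard_self_adjMatrix_add_smul_one [DecidableEq V] (t : ℝ) :
    (G.adjMatrix ℝ + t • 1) ⊙ (G.adjMatrix ℝ + t • 1) = G.adjMatrix ℝ + (t ^ 2) • 1 := by
  ext i j
  by_cases hij : i = j
  · simp [hij, sq]
  · simp [hij]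

variable [Fintype V] [DecidableEq V]

namespace IsEigenDecomposition

lemma sum_sq_le_card_sq {κ : Type*} [Fintype κ] [DecidableEq κ] {μ : κ → ℝ} {U : Matrix κ V ℝ}
    (h : IsEigenDecomposition (G.adjMatrix ℝ) μ U) : ∑ i, μ i ^ 2 ≤ (Fintype.card V : ℝ) ^ 2 :=
  h.mul_self.trace_eq.symm.trans_le trace_adjMatrix_mul_self_le

variable {μ : Fin (Fintype.card V) → ℝ} {U : Matrix (Fin (Fintype.card V)) V ℝ} {t : ℝ}

lemma topSum_le_card_mul (h : IsEigenDecomposition (G.adjMatrix ℝ) μ U) (ht : 0 ≤ t)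
    (hμt : ∀ i, -t ≤ μ i) (r : ℕ) : topSum μ r ≤ Fintype.card V * t := by
  have htrace : ∑ i, μ i = 0 := h.trace_eq.symm.trans (SimpleGraph.trace_adjMatrix ℝ G)
  calc topSum μ r ≤ ∑ i, (μ i)⁺ := topSum_le_sum_posPart μ r
    _ ≤ ∑ i, (μ i + t) := Finset.sum_le_sum fun i _ =>
        sup_le (le_add_of_nonneg_right ht) (neg_le_iff_add_nonneg.mp (hμt i))
    _ = Fintype.card V * t := by
        rw [Finset.sum_add_distrib, htrace, zero_add, Finset.sum_const, nsmul_eq_mul,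
          Finset.card_univ, Fintype.card_fin]

lemma sq_topSum_le (h : IsEigenDecomposition (G.adjMatrix ℝ) μ U) (hμ : Antitone μ) (ht : 0 ≤ t)
    (hμt : ∀ i, -t ≤ μ i) (r : ℕ) :
    topSum μ r ^ 2 ≤ Fintype.card V * (topSum μ (r ^ 2) + t ^ 2 * (r ^ 2 : ℕ)) := by
  obtain ⟨P, hP_nonneg, hP_le, hP_rank, hP_trace⟩ :=
    h.exists_rank_le_trace_eq_topSum ht hμt r
  have hPP_rank : (P ⊙ P).rank ≤ r ^ 2 := by
    rw [sq]
    exact (rank_hadamard_le P P).trans (Nat.mul_le_mul hP_rank hP_rank)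
  have hPP_le : P ⊙ P ≤ G.adjMatrix ℝ + (t ^ 2) • 1 := by
    rw [← hadamard_self_adjMatrix_add_smul_one]
    exact hadamard_self_le_hadamard_self hP_nonneg hP_le
  have hPP_herm : (P ⊙ P).IsHermitian :=
    (hP_nonneg.posSemidef.hadamard hP_nonneg.posSemidef).isHermitian
  calc topSum μ r ^ 2 ≤ Fintype.card V * (P ⊙ P).trace :=
        hP_trace ▸ sq_trace_le_card_mul_trace_hadamard_self P
    _ ≤ Fintype.card V * topSum (fun i => μ i + t ^ 2) (r ^ 2) := by
        gcongr
        exact ((h.add_smul_one (t ^ 2)).trace_le_topSum_rank (hμ.add_const _) hPP_herm hPP_le).trans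
          (topSum_mono _ hPP_rank)
    _ ≤ Fintype.card V * (topSum μ (r ^ 2) + t ^ 2 * (r ^ 2 : ℕ)) := by
        rw [mul_comm (t ^ 2)]
        gcongr
        exact topSum_add_const_le μ (sq_nonneg t) _

variable {c ε : ℝ}

lemma topSum_le_two_mul_rpow (h : IsEigenDecomposition (G.adjMatrix ℝ) μ U) (hμ : Antitone μ)
    (hc₀ : 0 ≤ c) (hc₁ : c ≤ 1) (hμc : ∀ i, -((Fintype.card V : ℝ) ^ (c / 2)) ≤ μ i) {r : ℕ}
    (hr : 1 ≤ r) : topSum μ r ≤ 2 * Fintype.card V * (r : ℝ) ^ c := by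
  have ht : (0 : ℝ) ≤ (Fintype.card V : ℝ) ^ (c / 2) := by positivity
  have hone : topSum μ 1 ≤ Fintype.card V := by
    have h₁ := (sq_topSum_le_mul_sum_sq μ 1).trans_eq (by rw [Nat.cast_one, one_mul])
    exact le_of_sq_le_sq (h₁.trans h.sum_sq_le_card_sq) (Nat.cast_nonneg _)
  have hsq : ((Fintype.card V : ℝ) ^ (c / 2)) ^ 2 = (Fintype.card V : ℝ) ^ c := by
    rw [← Real.rpow_mul_natCast (Nat.cast_nonneg _), Nat.cast_ofNat, div_mul_cancel₀ c two_ne_zero]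
  exact le_two_mul_rpow_of_sq_le hc₀ hc₁ hone (h.topSum_le_card_mul ht hμc)
    (hsq ▸ h.sq_topSum_le hμ ht hμc) hr

lemma posPart_le_two_mul_rpow (h : IsEigenDecomposition (G.adjMatrix ℝ) μ U) (hμ : Antitone μ)
    (hc₀ : 0 ≤ c) (hc₁ : c ≤ 1) (hμc : ∀ i, -((Fintype.card V : ℝ) ^ (c / 2)) ≤ μ i)
    (i : Fin (Fintype.card V)) :
    (μ i)⁺ ≤ 2 * Fintype.card V * ((i.val : ℝ) + 1) ^ (c - 1) := by
  have hi : (0 : ℝ) < i.val + 1 := by positivity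
  have htop := (succ_mul_posPart_le_topSum hμ i).trans
    (h.topSum_le_two_mul_rpow hμ hc₀ hc₁ hμc (Nat.le_add_left 1 i.val))
  rw [Real.rpow_sub_one hi.ne', ← mul_div_assoc, le_div_iff₀' hi]
  exact_mod_cast htop

lemma sum_sq_le_of_antitone {a : ℝ} (h : IsEigenDecomposition (G.adjMatrix ℝ) μ U)
    (hμ : Antitone μ) (ha : 0 ≤ a) (hε : 0 < ε) (hε' : ε ≤ 1 / 4)
    (hμε : ∀ i, -((Fintype.card V : ℝ) ^ (1 / 4 - ε)) ≤ μ i) :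
    ∑ i with μ i ≤ a ^ (1 / ε) * Fintype.card V, μ i ^ 2 ≤
      4 * a ^ 2 * (1 + 1 / (2 * ε)) * (Fintype.card V : ℝ) ^ 2 +
        Fintype.card V * ((Fintype.card V : ℝ) ^ (1 / 4 - ε)) ^ 2 := by
  have hc : 1 / 4 - ε = (1 / 2 - 2 * ε) / 2 := by ring
  have hdecay (i) : (μ i)⁺ ≤ 2 * Fintype.card V * ((i.val : ℝ) + 1) ^ (-(1 / 2 + 2 * ε)) := by
    rw [show -(1 / 2 + 2 * ε) = 1 / 2 - 2 * ε - 1 by ring]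
    exact h.posPart_le_two_mul_rpow hμ (by linarith) (by linarith) (hc ▸ hμε) i
  refine (Finset.sum_le_sum fun i _ => sq_le_posPart_sq_add_sq (hμε i)).trans ?_
  rw [Finset.sum_add_distrib, Finset.sum_const, nsmul_eq_mul]
  gcongr
  · exact sum_posPart_sq_le ha hε hε' hdecay
  · exact (Finset.card_filter_le _ _).trans_eq (Fintype.card_fin _)

lemma sum_sq_le {μ : V → ℝ} {U : Matrix V V ℝ} {a : ℝ}
    (h : IsEigenDecomposition (G.adjMatrix ℝ) μ U) (ha : 0 ≤ a) (hε : 0 < ε) (hε' : ε ≤ 1 / 4)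
    (hμε : ∀ i, -((Fintype.card V : ℝ) ^ (1 / 4 - ε)) ≤ μ i) :
    ∑ i with μ i ≤ a ^ (1 / ε) * Fintype.card V, μ i ^ 2 ≤
      4 * a ^ 2 * (1 + 1 / (2 * ε)) * (Fintype.card V : ℝ) ^ 2 +
        Fintype.card V * ((Fintype.card V : ℝ) ^ (1 / 4 - ε)) ^ 2 := by
  obtain ⟨e, he⟩ := exists_equiv_antitone μ
  rw [Finset.sum_filter, ← e.sum_comp, ← Finset.sum_filter]
  exact (h.submatrix e).sum_sq_le_of_antitone he ha hε hε' fun i => hμε (e i)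

end IsEigenDecomposition

end Graph

theorem stmt5_general {ε δ : ℝ} (hε : ε ∈ Set.Ioc 0 (1 / 4)) (hδ : 0 < δ) :
    ∃ n₀ : ℕ, ∀ {V : Type*} [Fintype V] [DecidableEq V] (G : SimpleGraph V) (μ : V → ℝ)
      (v : V → V → ℝ), n₀ ≤ Fintype.card V →
      (∀ i, (adjMat G).mulVec (v i) = μ i • v i) →
      (∀ i j, (∑ k, v i k * v j k) = if i = j then (1 : ℝ) else 0) →
      (∀ i, -((Fintype.card V : ℝ) ^ (1 / 4 - ε)) ≤ μ i) →
      ∑ i with μ i ≤ (ε * δ) ^ (1 / ε) * Fintype.card V, μ i ^ 2 ≤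
        δ * (Fintype.card V : ℝ) ^ 2 := by
  classical
  refine ⟨⌈(4 / δ) ^ 2⌉₊, fun {V} _ _ G μ v hn hv hon hμ => ?_⟩
  rw [adjMat_eq_adjMatrix] at hv
  have h := IsEigenDecomposition.of_orthonormal hv hon
  have hn' : (4 / δ) ^ 2 ≤ Fintype.card V := Nat.ceil_le.mp hn
  rcases le_or_gt δ 1 with hδ₁ | hδ₁
  · calc _ ≤ 4 * (ε * δ) ^ 2 * (1 + 1 / (2 * ε)) * (Fintype.card V : ℝ) ^ 2 +
          Fintype.card V * ((Fintype.card V : ℝ) ^ (1 / 4 - ε)) ^ 2 :=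
        h.sum_sq_le (mul_nonneg hε.1.le hδ.le) hε.1 hε.2 hμ
      _ ≤ 3 / 4 * δ * (Fintype.card V : ℝ) ^ 2 + δ / 4 * (Fintype.card V : ℝ) ^ 2 := by
        refine add_le_add ?_ (mul_rpow_sq_le hδ hδ₁ hε.1.le hn')
        exact mul_le_mul_of_nonneg_right (four_mul_sq_mul_le hε.1 hε.2 hδ.le hδ₁) (sq_nonneg _)
      _ = δ * (Fintype.card V : ℝ) ^ 2 := by ring
  · calc _ ≤ ∑ i, μ i ^ 2 := Finset.sum_le_sum_of_subset_of_nonneg (Finset.filter_subset _ _)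
          fun _ _ _ => sq_nonneg _
      _ ≤ (Fintype.card V : ℝ) ^ 2 := h.sum_sq_le_card_sq
      _ ≤ δ * (Fintype.card V : ℝ) ^ 2 := le_mul_of_one_le_left (sq_nonneg _) hδ₁.le

-- If `λₙ ≥ -n ^ (1/4 - ε)`, then `∑_{i : λ_i ≤ (εδ)^(1/ε) n} λ_i ^ 2 ≤ δ n ^ 2`.
theorem stmt5 (ε δ : ℝ) (hε : ε ∈ Set.Ioo (0 : ℝ) 0.01) (hδ : δ ∈ Set.Ioo (0 : ℝ) 0.01) :
    ∃ n₀ : ℕ, ∀ (n : ℕ) (hn : n₀ ≤ n) (hn1 : 1 ≤ n)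
      (G : SimpleGraph (Fin n)) (μ : Fin n → ℝ) (v : Fin n → Fin n → ℝ),
      Antitone μ →
      (∀ i, (adjMat G).mulVec (v i) = μ i • v i) →
      (∀ i j : Fin n, (∑ k, v i k * v j k) = if i = j then (1 : ℝ) else 0) →
      -((n : ℝ) ^ ((1 : ℝ) / 4 - ε)) ≤ μ ⟨n - 1, by omega⟩ →
      (∑ i ∈ Finset.univ.filter (fun i => μ i ≤ (ε * δ) ^ ((1 : ℝ) / ε) * (n : ℝ)), μ i ^ 2)
        ≤ δ * (n : ℝ) ^ 2 := by
  obtain ⟨n₀, h⟩ := stmt5_general ⟨hε.1, hε.2.le.trans (by norm_num)⟩ hδ.1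
  refine ⟨n₀, fun n hn _ G μ v hμ hv hon hlast => ?_⟩
  have hlow (i : Fin n) : -((n : ℝ) ^ ((1 : ℝ) / 4 - ε)) ≤ μ i :=
    hlast.trans (hμ (Nat.le_sub_one_of_lt i.isLt))
  simpa only [Fintype.card_fin] using h G μ v (by simpa) hv hon (by simpa using hlow)
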